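/- arXiv:1610.02129 — 2 statements merged into one kernel-verified Lean document; each statement's English description precedes it below -/
import Mathlib

section
/- Let p ∈ [1,∞) and let (X,d,μ) be a proper D-doubling metric measure space satisfying a (1,p)-Poincaré inequality with constants (C, C_PI) and the pointwise Poincaré inequality PtPI_p with constants (C, C_PPI). Then for every x, y ∈ X with d(x,y) = r > 0 and every lower semicontinuous g: X → [0,∞) with g^p locally integrable, there exists a Lipschitz curve γ joining x to y with Len(γ) ≤ 5·C_PPI·r and ∫_γ g ds ≤ 4·C_PPI·r·(M_{p,Cr} g(x) + M_{p,Cr} g(y)). In particular X is A_p-connected with constants (5C_PPI, 4C_PPI) (using the maximal functions at scale Cr). -/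
/-!
The pointwise Poincaré inequality produces the curves directly, through a discrete version of the
path functional `z ↦ inf ∫_γ h ds`.

Fix a bounded continuous `h ≥ 0` and `δ > 0`. A `δ`-almost curve is a map `σ` on `[0, ℓ]` with
`d(σ s, σ t) ≤ |s - t| + δ`; it may jump. Let `f z` be the infimum of `∫ h ∘ σ` over `δ`-almost
curves from `x` to `z`, truncated at a level `N` (`chainCost`). Appending a genuine curve `γ` to an
almost curve shows that `h` is an upper gradient of `f`; appending a jump of size at most `δ` shows
that `f` is locally Lipschitz, even when `X` is not known to contain any rectifiable curve. So
`PtPI` applies to `f`, and gives a `δ`-almost curve from `x` to `y` whose cost is as small as the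
maximal functions of `h` predict (`PtPI.reach`).

Put `A = CPPI · d(x, y)` and let `τ = M g(x) + M g(y)` be finite. Take `h = g_k + ε_k`, where `g_k` are
bounded Lipschitz functions increasing to `g` and `ε_k` decreases to `τ / 2`. By Minkowski the cost
is at most `A (τ + 2 ε_k) + A ε_k / 2`, which is at most `(9/2) A ε_k` because `τ ≤ 2 ε_k`; hence the
lengths are at most `(9/2) A`. As `δ → 0` an Arzelà–Ascoli argument gives a limit that is a genuine
curve, and lower semicontinuity gives `∫_γ g ds ≤ (9/4) A τ` (`exists_curve_of_maxBdd`).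

If one of the two maximal functions is infinite, `maxFn` takes the value `0` there, and `g` is
unbounded near that endpoint. The case `g = 0` of the previous paragraph says that `X` is
quasiconvex with constant `(9/2) CPPI`. Hence a loop of length `A / 2` at the endpoint can be built
along which `g` is not integrable (`exists_bad_loop`). Joined with a quasiconvexity curve it has
length at most `5 A`, and its Bochner integral of `g` is `0` by convention.
-/

open MeasureTheory Metric Set Filter Topology

noncomputable section

/-- A curve: a `1`-Lipschitz map on `[0, len]`, parametrized by arclength;
its length is `len`. -/
structure Curve (X : Type*) [MetricSpace X] where
  len : ℝ
  len_nonneg : 0 ≤ len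
  toFun : ℝ → X
  lipschitz : LipschitzOnWith 1 toFun (Set.Icc 0 len)

namespace Curve

variable {X : Type*} [MetricSpace X]

/-- The curve integral `∫_γ g ds`. -/
noncomputable def integral (γ : Curve X) (g : X → ℝ) : ℝ :=
  ∫ t in Set.Icc (0:ℝ) γ.len, g (γ.toFun t)

/-- `γ` joins `x` to `y`. -/
def Joins (γ : Curve X) (x y : X) : Prop :=
  γ.toFun 0 = x ∧ γ.toFun γ.len = y

end Curve

variable {X : Type*}

/-- The restricted maximal function `M_{p,s} f x`. -/
noncomputable def maxFn [MetricSpace X] [MeasurableSpace X] (μ : Measure X)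
    (p s : ℝ) (f : X → ℝ) (x : X) : ℝ :=
  ⨆ r : Set.Ioc (0:ℝ) s, (⨍ y in ball x (r.1), f y ^ p ∂μ) ^ (1/p)

/-- `g` is an upper gradient of `f`. -/
def IsUpperGradient [MetricSpace X] (g f : X → ℝ) : Prop :=
  ∀ (γ : Curve X) (x y : X), γ.Joins x y → |f x - f y| ≤ γ.integral g

/-- The pointwise (upper) Lipschitz constant `Lip f (x)`. -/
noncomputable def lipConst [MetricSpace X] (f : X → ℝ) (x : X) : ℝ :=
  Filter.limsup (fun y => |f x - f y| / dist x y) (𝓝[≠] x)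

/-- All balls have positive and finite measure. -/
def NondegBalls [MetricSpace X] [MeasurableSpace X] (μ : Measure X) : Prop :=
  ∀ (x : X) (r : ℝ), 0 < r → 0 < μ (ball x r) ∧ μ (ball x r) < ⊤

/-- `μ` is `D`-doubling up to scale `r0`. -/
def DoublingUpTo [MetricSpace X] [MeasurableSpace X] (μ : Measure X) (D r0 : ℝ) : Prop :=
  ∀ (x : X) (r : ℝ), 0 < r → r < r0 →
    μ (ball x (2*r)) ≤ ENNReal.ofReal D * μ (ball x r)

/-- `μ` is `D`-doubling. -/
def Doubling [MetricSpace X] [MeasurableSpace X] (μ : Measure X) (D : ℝ) : Prop :=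
  ∀ (x : X) (r : ℝ), 0 < r →
    μ (ball x (2*r)) ≤ ENNReal.ofReal D * μ (ball x r)

/-- The `(1,p)`-Poincaré inequality with constants `(C, CPI)` up to scale `r0`. -/
def PoincareUpTo [MetricSpace X] [MeasurableSpace X] (μ : Measure X)
    (p C CPI r0 : ℝ) : Prop :=
  ∀ f : X → ℝ, (∃ K : NNReal, LipschitzWith K f) →
    ∀ (x : X) (r : ℝ), 0 < r → r < r0 →
      ⨍ y in ball x r, |f y - ⨍ z in ball x r, f z ∂μ| ∂μ ≤
        CPI * r * (⨍ y in ball x (C*r), (lipConst f y) ^ p ∂μ) ^ (1/p)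

/-- The `(1,p)`-Poincaré inequality with constants `(C, CPI)`. -/
def Poincare [MetricSpace X] [MeasurableSpace X] (μ : Measure X) (p C CPI : ℝ) : Prop :=
  ∀ f : X → ℝ, (∃ K : NNReal, LipschitzWith K f) →
    ∀ (x : X) (r : ℝ), 0 < r →
      ⨍ y in ball x r, |f y - ⨍ z in ball x r, f z ∂μ| ∂μ ≤
        CPI * r * (⨍ y in ball x (C*r), (lipConst f y) ^ p ∂μ) ^ (1/p)

/-- The pointwise Poincaré inequality `PtPI_p` with constants `(C, CPPI)`. -/
def PtPI [MetricSpace X] [MeasurableSpace X] (μ : Measure X) (p C CPPI : ℝ) : Prop :=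
  ∀ f : X → ℝ, Continuous f → ∀ g : X → ℝ, Measurable g → (∀ z, 0 ≤ g z) →
    IsUpperGradient g f → ∀ x y : X, x ≠ y →
      |f x - f y| ≤ CPPI * dist x y *
        (maxFn μ p (C * dist x y) g x + maxFn μ p (C * dist x y) g y)

/-- `A_p`-connectivity with constants `(C, CA)`. -/
def ApConnected [MetricSpace X] [MeasurableSpace X] (μ : Measure X) (p C CA : ℝ) : Prop :=
  ∀ x y : X, x ≠ y → ∀ g : X → ℝ, LowerSemicontinuous g → (∀ z, 0 ≤ g z) →
    ∃ γ : Curve X, γ.Joins x y ∧ γ.len ≤ C * dist x y ∧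
      γ.integral g ≤ CA * dist x y *
        (maxFn μ p (C * dist x y) g x + maxFn μ p (C * dist x y) g y)

/-- The admissible obstacle functions `E^p_{x,y,τ,C}`. -/
def obstacles [MetricSpace X] [MeasurableSpace X] (μ : Measure X) (p τ C : ℝ)
    (x y : X) : Set (X → ℝ) :=
  {g | LowerSemicontinuous g ∧ (∀ z, g z ∈ Set.Icc (0:ℝ) 1) ∧
      maxFn μ p (C * dist x y) g x + maxFn μ p (C * dist x y) g y < τ}

/-- The curves `Γ^C_{x,y}` joining `x` to `y` with length at most `C·d(x,y)`. -/
def curvesBetween [MetricSpace X] (C : ℝ) (x y : X) : Set (Curve X) :=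
  {γ | γ.Joins x y ∧ γ.len ≤ C * dist x y}

/-- The connectivity function `α^p(C, τ)`. -/
noncomputable def alphaFn [MetricSpace X] [MeasurableSpace X] (μ : Measure X)
    (p C τ : ℝ) : ℝ :=
  sSup {v | ∃ x y : X, x ≠ y ∧ ∃ g ∈ obstacles μ p τ C x y,
    v = sInf ((fun γ : Curve X => (dist x y)⁻¹ * γ.integral g) '' curvesBetween C x y)}

/-- `X` is `L`-quasiconvex. -/
def QuasiconvexSpace (X : Type*) [MetricSpace X] (L : ℝ) : Prop :=
  ∀ x y : X, ∃ γ : Curve X, γ.Joins x y ∧ γ.len ≤ L * dist x y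
/-! ### Almost-curves and the chain functional -/

section Chains

/-- Concatenation of `σ` (run up to time `ℓ`) with `τ` (started at time `ℓ`). -/
def glue (σ : ℝ → X) (ℓ : ℝ) (τ : ℝ → X) : ℝ → X :=
  fun t => if t ≤ ℓ then σ t else τ (t - ℓ)

lemma glue_left {σ τ : ℝ → X} {ℓ t : ℝ} (h : t ≤ ℓ) : glue σ ℓ τ t = σ t := if_pos h

lemma glue_right {σ τ : ℝ → X} {ℓ t : ℝ} (h0 : σ ℓ = τ 0) (h : ℓ ≤ t) :
    glue σ ℓ τ t = τ (t - ℓ) := by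
  rcases h.eq_or_lt with rfl | h
  · simp [glue, h0]
  · exact if_neg (not_le.2 h)

variable [MetricSpace X]

/-- Only the piece `τ` has to leave its starting point with unit speed; both pieces may have
jumps of size `δ`. This is what allows a jump to be appended without increasing the defect. -/
lemma dist_glue_le {σ τ : ℝ → X} {ℓ L δ : ℝ} (h0 : σ ℓ = τ 0)
    (hσ : ∀ s t, 0 ≤ s → s ≤ t → t ≤ ℓ → dist (σ s) (σ t) ≤ (t - s) + δ)
    (hτ0 : ∀ t, 0 ≤ t → t ≤ L → dist (τ 0) (τ t) ≤ t)
    (hτ : ∀ s t, 0 ≤ s → s ≤ t → t ≤ L → dist (τ s) (τ t) ≤ (t - s) + δ)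
    (s t : ℝ) (hs : 0 ≤ s) (hst : s ≤ t) (ht : t ≤ ℓ + L) :
    dist (glue σ ℓ τ s) (glue σ ℓ τ t) ≤ (t - s) + δ := by
  rcases le_total t ℓ with h | h
  · rw [glue_left h, glue_left (hst.trans h)]
    exact hσ s t hs hst h
  rcases le_total s ℓ with h' | h'
  · rw [glue_left h', glue_right h0 h]
    have h1 := hσ s ℓ hs h' le_rfl
    have h2 := hτ0 (t - ℓ) (by linarith) (by linarith)
    have h3 := dist_triangle (σ s) (σ ℓ) (τ (t - ℓ))
    rw [← h0] at h2
    linarith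
  · rw [glue_right h0 h, glue_right h0 h']
    have := hτ (s - ℓ) (t - ℓ) (by linarith) (by linarith) (by linarith)
    linarith

/-- `σ` on `[0, ℓ]` is a `δ`-almost curve from `x` to `z`: it is `1`-Lipschitz up to an additive
defect `δ`. Such maps need not be continuous. -/
structure IsAlmostCurve (δ : ℝ) (x z : X) (ℓ : ℝ) (σ : ℝ → X) : Prop where
  nonneg : 0 ≤ ℓ
  source : σ 0 = x
  target : σ ℓ = z
  dist_le : ∀ s t, 0 ≤ s → s ≤ t → t ≤ ℓ → dist (σ s) (σ t) ≤ (t - s) + δ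

/-- `z` can be reached from `x` by a `δ`-almost curve along which `h` has integral at most `c`. -/
def Reach (δ : ℝ) (h : X → ℝ) (x z : X) (c : ℝ) : Prop :=
  ∃ (ℓ : ℝ) (σ : ℝ → X), IsAlmostCurve δ x z ℓ σ ∧
    IntervalIntegrable (fun t => h (σ t)) volume 0 ℓ ∧ ∫ t in (0:ℝ)..ℓ, h (σ t) ≤ c

lemma Reach.refl {δ : ℝ} (hδ : 0 ≤ δ) (h : X → ℝ) (x : X) : Reach δ h x x 0 :=
  ⟨0, fun _ => x, ⟨le_rfl, rfl, rfl, fun s t _ _ _ => by simp; linarith⟩, by simp, by simp⟩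

lemma Reach.extend {δ : ℝ} {h : X → ℝ} {x a : X} {c L : ℝ} {τ : ℝ → X}
    (H : Reach δ h x a c) (hL : 0 ≤ L) (h0 : τ 0 = a)
    (hτ0 : ∀ t, 0 ≤ t → t ≤ L → dist (τ 0) (τ t) ≤ t)
    (hτ : ∀ s t, 0 ≤ s → s ≤ t → t ≤ L → dist (τ s) (τ t) ≤ (t - s) + δ)
    (hi : IntervalIntegrable (fun t => h (τ t)) volume 0 L) :
    Reach δ h x (τ L) (c + ∫ t in (0:ℝ)..L, h (τ t)) := by
  obtain ⟨ℓ, σ, hσ, hσi, hσc⟩ := H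
  have h0' : σ ℓ = τ 0 := hσ.target.trans h0.symm
  have e1 : EqOn (fun t => h (σ t)) (fun t => h (glue σ ℓ τ t)) (uIcc 0 ℓ) := by
    intro t ht
    rw [uIcc_of_le hσ.nonneg] at ht
    simp only [glue_left ht.2]
  have e2 : EqOn (fun t => h (τ (t - ℓ))) (fun t => h (glue σ ℓ τ t)) (uIcc ℓ (ℓ + L)) := by
    intro t ht
    rw [uIcc_of_le (by linarith)] at ht
    simp only [glue_right h0' ht.1]
  have i1 : IntervalIntegrable (fun t => h (glue σ ℓ τ t)) volume 0 ℓ :=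
    (intervalIntegrable_congr (e1.mono uIoc_subset_uIcc)).1 hσi
  have i2 : IntervalIntegrable (fun t => h (glue σ ℓ τ t)) volume ℓ (ℓ + L) := by
    refine (intervalIntegrable_congr (e2.mono uIoc_subset_uIcc)).1 ?_
    have := hi.comp_sub_right ℓ
    rwa [zero_add, add_comm L] at this
  refine ⟨ℓ + L, glue σ ℓ τ, ⟨add_nonneg hσ.nonneg hL, ?_, ?_, ?_⟩, i1.trans i2, ?_⟩
  · rw [glue_left hσ.nonneg, hσ.source]
  · rw [glue_right h0' (by linarith), add_sub_cancel_left]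
  · exact dist_glue_le h0' hσ.dist_le hτ0 hτ
  · rw [← intervalIntegral.integral_add_adjacent_intervals i1 i2,
      ← intervalIntegral.integral_congr e1, ← intervalIntegral.integral_congr e2,
      intervalIntegral.integral_comp_sub_right (fun t => h (τ t)) ℓ]
    simpa using hσc

/-- Appending a jump of size at most `δ`: wait at `a` for time `dist a b`, then jump to `b`. -/
lemma Reach.jump {δ : ℝ} {h : X → ℝ} {x a b : X} {c : ℝ} (H : Reach δ h x a c)
    (hab : dist a b ≤ δ) : Reach δ h x b (c + h a * dist a b) := by
  rcases eq_or_ne a b with rfl | hne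
  · simpa using H
  have hd : 0 < dist a b := dist_pos.2 hne
  set τ : ℝ → X := fun t => if t < dist a b then a else b with hτ
  have hτa : ∀ t, t < dist a b → τ t = a := fun t ht => if_pos ht
  have hτb : ∀ t, dist a b ≤ t → τ t = b := fun t ht => if_neg (not_lt.2 ht)
  have e : EqOn (fun _ => h a) (fun t => h (τ t)) (uIoo 0 (dist a b)) := by
    intro t ht
    rw [uIoo_of_le hd.le] at ht
    simp only [hτa t ht.2]
  have key := H.extend (τ := τ) (L := dist a b) hd.le (hτa 0 hd) ?_ ?_
    ((intervalIntegrable_const (c := h a)).congr_uIoo e)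
  · rw [hτb _ le_rfl] at key
    have : ∫ t in (0:ℝ)..dist a b, h (τ t) = h a * dist a b := by
      rw [← intervalIntegral.integral_congr_uIoo e]
      simp [mul_comm]
    rwa [this] at key
  · intro t h0 ht
    rw [hτa 0 hd]
    rcases lt_or_ge t (dist a b) with h1 | h1
    · rw [hτa t h1]; simpa using h0
    · rw [hτb t h1]; exact h1
  · intro s t hs hst ht
    have hδ : 0 ≤ δ := hd.le.trans hab
    rcases lt_or_ge t (dist a b) with h1 | h1
    · rw [hτa t h1, hτa s (hst.trans_lt h1), dist_self]; linarith
    · rcases lt_or_ge s (dist a b) with h2 | h2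
      · rw [hτb t h1, hτa s h2]; linarith
      · rw [hτb t h1, hτb s h2, dist_self]; linarith

/-- The least cost of reaching `z` from `x` by `δ`-almost curves, truncated at `N`
(so that it is finite even when `z` cannot be reached). -/
def chainCost (δ : ℝ) (h : X → ℝ) (N : ℝ) (x z : X) : ℝ :=
  sInf {c | c = N ∨ Reach δ h x z c}

lemma Reach.nonneg {δ : ℝ} {h : X → ℝ} (hh : ∀ z, 0 ≤ h z) {x z : X} {c : ℝ}
    (H : Reach δ h x z c) : 0 ≤ c := by
  obtain ⟨ℓ, σ, hσ, -, hc⟩ := H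
  exact (intervalIntegral.integral_nonneg hσ.nonneg fun t _ => hh _).trans hc

lemma chainCost_le_add {δ : ℝ} {h : X → ℝ} (hh : ∀ z, 0 ≤ h z) {N : ℝ} (hN : 0 ≤ N) {x a b : X}
    {e : ℝ} (he : 0 ≤ e) (H : ∀ c, Reach δ h x a c → Reach δ h x b (c + e)) :
    chainCost δ h N x b ≤ chainCost δ h N x a + e := by
  have hbdd : BddBelow {c | c = N ∨ Reach δ h x b c} := by
    refine ⟨0, ?_⟩
    rintro c (rfl | hc)
    exacts [hN, hc.nonneg hh]
  rw [← sub_le_iff_le_add]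
  refine le_csInf ⟨N, Or.inl rfl⟩ ?_
  rintro c (rfl | hc)
  · have := csInf_le hbdd (Or.inl rfl : c ∈ _)
    unfold chainCost; linarith
  · have := csInf_le hbdd (Or.inr (H c hc) : c + e ∈ _)
    unfold chainCost; linarith

lemma chainCost_self {δ : ℝ} (hδ : 0 ≤ δ) {h : X → ℝ} (hh : ∀ z, 0 ≤ h z) {N : ℝ} (hN : 0 ≤ N)
    (x : X) : chainCost δ h N x x = 0 := by
  refine le_antisymm (csInf_le ⟨0, ?_⟩ (Or.inr (Reach.refl hδ h x)))
    (le_csInf ⟨N, Or.inl rfl⟩ ?_)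
  all_goals
    rintro c (rfl | hc)
    exacts [hN, hc.nonneg hh]

lemma exists_reach_of_chainCost_lt {δ : ℝ} {h : X → ℝ} {N : ℝ} {x z : X}
    (H : chainCost δ h N x z < N) : Reach δ h x z N := by
  obtain ⟨c, hc, hcN⟩ := exists_lt_of_csInf_lt ⟨N, Or.inl rfl⟩ H
  rcases hc with rfl | ⟨ℓ, σ, h1, h2, h3⟩
  · exact absurd hcN (lt_irrefl _)
  · exact ⟨ℓ, σ, h1, h2, h3.trans hcN.le⟩

lemma Curve.integral_eq (γ : Curve X) (g : X → ℝ) :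
    γ.integral g = ∫ t in (0:ℝ)..γ.len, g (γ.toFun t) := by
  rw [Curve.integral, intervalIntegral.integral_of_le γ.len_nonneg, integral_Icc_eq_integral_Ioc]

lemma Curve.dist_le (γ : Curve X) {s t : ℝ} (hs : 0 ≤ s) (hst : s ≤ t) (ht : t ≤ γ.len) :
    dist (γ.toFun s) (γ.toFun t) ≤ t - s := by
  have := γ.lipschitz.dist_le_mul s ⟨hs, hst.trans ht⟩ t ⟨hs.trans hst, ht⟩
  rwa [NNReal.coe_one, one_mul, Real.dist_eq, abs_sub_comm, abs_of_nonneg (by linarith)] at this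

lemma Curve.intervalIntegrable (γ : Curve X) {h : X → ℝ} (hc : Continuous h) :
    IntervalIntegrable (fun t => h (γ.toFun t)) volume 0 γ.len := by
  refine ContinuousOn.intervalIntegrable ?_
  rw [uIcc_of_le γ.len_nonneg]
  exact hc.comp_continuousOn γ.lipschitz.continuousOn

/-- The curve traversed backwards. -/
def Curve.reverse (γ : Curve X) : Curve X where
  len := γ.len
  len_nonneg := γ.len_nonneg
  toFun t := γ.toFun (γ.len - t)
  lipschitz := by
    refine LipschitzOnWith.of_dist_le_mul fun s hs t ht => ?_
    have := γ.lipschitz.dist_le_mul (γ.len - s) ⟨by linarith [hs.2], by linarith [hs.1]⟩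
      (γ.len - t) ⟨by linarith [ht.2], by linarith [ht.1]⟩
    rwa [dist_sub_left] at this

lemma Curve.reverse_integral (γ : Curve X) (g : X → ℝ) :
    γ.reverse.integral g = γ.integral g := by
  rw [Curve.integral_eq, Curve.integral_eq]
  change ∫ t in (0:ℝ)..γ.len, g (γ.toFun (γ.len - t)) = _
  rw [intervalIntegral.integral_comp_sub_left (fun t => g (γ.toFun t))]
  simp

lemma isUpperGradient_chainCost {δ : ℝ} (hδ : 0 ≤ δ) {h : X → ℝ} (hh : ∀ z, 0 ≤ h z)
    (hc : Continuous h) {N : ℝ} (hN : 0 ≤ N) (x : X) :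
    IsUpperGradient h (chainCost δ h N x) := by
  have key : ∀ (γ : Curve X) (a b : X), γ.Joins a b →
      chainCost δ h N x b ≤ chainCost δ h N x a + γ.integral h := by
    rintro γ a b ⟨rfl, rfl⟩
    rw [Curve.integral_eq]
    refine chainCost_le_add hh hN
      (intervalIntegral.integral_nonneg γ.len_nonneg fun t _ => hh _) fun c H => ?_
    refine H.extend γ.len_nonneg rfl (fun t h0 ht => ?_) (fun s t hs hst ht => ?_)
      (γ.intervalIntegrable hc)
    · simpa using γ.dist_le le_rfl h0 ht
    · linarith [γ.dist_le hs hst ht]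
  intro γ a b hab
  have h1 := key γ a b hab
  have h2 := key γ.reverse b a ⟨by simpa [Curve.reverse] using hab.2,
    by simpa [Curve.reverse] using hab.1⟩
  rw [Curve.reverse_integral] at h2
  rw [abs_le]
  constructor <;> linarith

lemma continuous_chainCost {δ : ℝ} (hδ : 0 < δ) {h : X → ℝ} (hh : ∀ z, 0 ≤ h z) {K : ℝ}
    (hK : ∀ z, h z ≤ K) {N : ℝ} (hN : 0 ≤ N) (x : X) :
    Continuous (chainCost δ h N x) := by
  have hK0 : 0 ≤ K := (hh x).trans (hK x)
  have key : ∀ a b, dist a b ≤ δ →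
      chainCost δ h N x b ≤ chainCost δ h N x a + K * dist a b := by
    intro a b hab
    have h1 := chainCost_le_add (x := x) (a := a) (b := b) hh hN
      (mul_nonneg (hh a) dist_nonneg) fun c H => H.jump hab
    have h2 := mul_le_mul_of_nonneg_right (hK a) (dist_nonneg (x := a) (y := b))
    linarith
  rw [Metric.continuous_iff]
  intro b ε hε
  refine ⟨min δ (ε / (K + 1)), by positivity, fun a hab => ?_⟩
  have h1 := key a b (hab.le.trans (min_le_left _ _))
  have h2 := key b a (by rw [dist_comm]; exact hab.le.trans (min_le_left _ _))
  have h3 : dist a b * (K + 1) < ε := (lt_div_iff₀ (by positivity)).1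
    (hab.trans_le (min_le_right _ _))
  have h4 := dist_nonneg (x := a) (y := b)
  rw [dist_comm b a] at h2
  rw [Real.dist_eq, abs_lt]
  constructor <;> nlinarith

/-- The pointwise Poincaré inequality applied to the chain cost: almost curves with arbitrarily
small defect exist, with the bound on the integral of `h` that `PtPI` predicts. -/
lemma PtPI.reach [MeasurableSpace X] [BorelSpace X] {μ : Measure X} {p C CPPI : ℝ}
    (hPt : PtPI μ p C CPPI) {x y : X} (hxy : x ≠ y) {h : X → ℝ} (hc : Continuous h)
    (hh : ∀ z, 0 ≤ h z) {K : ℝ} (hK : ∀ z, h z ≤ K) {δ : ℝ} (hδ : 0 < δ) {N : ℝ} (hN : 0 ≤ N)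
    (hlt : CPPI * dist x y *
      (maxFn μ p (C * dist x y) h x + maxFn μ p (C * dist x y) h y) < N) :
    Reach δ h x y N := by
  have h1 := hPt _ (continuous_chainCost hδ hh hK hN x) h hc.measurable hh
    (isUpperGradient_chainCost hδ.le hh hc hN x) x y hxy
  rw [chainCost_self hδ.le hh hN, zero_sub, abs_neg] at h1
  exact exists_reach_of_chainCost_lt ((le_abs_self _).trans_lt (h1.trans_lt hlt))

end Chains

/-! ### Maximal functions -/

section MaxFn

lemma average_nonneg [MeasurableSpace X] {ν : Measure X} {f : X → ℝ} (hf : ∀ z, 0 ≤ f z) :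
    0 ≤ ⨍ y, f y ∂ν :=
  integral_nonneg hf

/-- Minkowski's inequality, for a probability measure and a constant summand. -/
lemma rpow_integral_add_const_le [MeasurableSpace X] {ν : Measure X} [IsProbabilityMeasure ν]
    {p : ℝ} (hp : 1 ≤ p) {g h : X → ℝ} {ε : ℝ} (hε : 0 ≤ ε) (hg : ∀ z, 0 ≤ g z) (hh : ∀ z, 0 ≤ h z)
    (hgm : AEStronglyMeasurable g ν) (hle : ∀ z, h z ≤ g z + ε)
    (hgi : Integrable (fun z => g z ^ p) ν) :
    (∫ z, h z ^ p ∂ν) ^ (1/p) ≤ (∫ z, g z ^ p ∂ν) ^ (1/p) + ε := by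
  have hp0 : 0 < p := by linarith
  have hP0 : ENNReal.ofReal p ≠ 0 := by simpa using hp0
  have hPt : ENNReal.ofReal p ≠ ⊤ := ENNReal.ofReal_ne_top
  have hPr : (ENNReal.ofReal p).toReal = p := ENNReal.toReal_ofReal hp0.le
  have mg : MemLp g (ENNReal.ofReal p) ν := by
    rw [← integrable_norm_rpow_iff hgm hP0 hPt, hPr]
    simpa only [Real.norm_eq_abs, abs_of_nonneg (hg _)] using hgi
  have mc : MemLp (fun _ : X => ε) (ENNReal.ofReal p) ν := memLp_const ε
  have ms := mg.add mc
  have hs : ∀ z, 0 ≤ (g + fun _ : X => ε : X → ℝ) z := fun z => add_nonneg (hg z) hε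
  have key := eLpNorm_add_le mg.1 mc.1 (p := ENNReal.ofReal p) (by simpa using hp)
  rw [ms.eLpNorm_eq_integral_rpow_norm hP0 hPt, mg.eLpNorm_eq_integral_rpow_norm hP0 hPt,
    mc.eLpNorm_eq_integral_rpow_norm hP0 hPt, hPr] at key
  simp only [Real.norm_eq_abs, abs_of_nonneg (hg _), abs_of_nonneg (hs _), abs_of_nonneg hε] at key
  have hA : 0 ≤ (∫ z, g z ^ p ∂ν) ^ p⁻¹ :=
    Real.rpow_nonneg (integral_nonneg fun z => Real.rpow_nonneg (hg z) p) _
  rw [integral_const, probReal_univ, one_smul, Real.rpow_rpow_inv hε hp0.ne',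
    ← ENNReal.ofReal_add hA hε, ENNReal.ofReal_le_ofReal_iff (add_nonneg hA hε)] at key
  rw [one_div]
  refine le_trans ?_ key
  have hsi : Integrable (fun z => (g + fun _ : X => ε : X → ℝ) z ^ p) ν := by
    have := (integrable_norm_rpow_iff ms.1 hP0 hPt).2 ms
    simpa only [hPr, Real.norm_eq_abs, abs_of_nonneg (hs _)] using this
  refine Real.rpow_le_rpow (integral_nonneg fun z => Real.rpow_nonneg (hh z) p) ?_
    (inv_nonneg.2 hp0.le)
  exact integral_mono_of_nonneg (Eventually.of_forall fun z => Real.rpow_nonneg (hh z) p) hsi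
    (Eventually.of_forall fun z => Real.rpow_le_rpow (hh z) (hle z) hp0.le)

variable [MetricSpace X] [MeasurableSpace X]

/-- The averages over which the supremum in `maxFn μ p s f x` is taken are bounded. Otherwise that
supremum takes the junk value `0`. -/
def MaxBdd (μ : Measure X) (p s : ℝ) (f : X → ℝ) (x : X) : Prop :=
  BddAbove (range fun r : Set.Ioc (0:ℝ) s => (⨍ y in ball x r.1, f y ^ p ∂μ) ^ (1/p))

lemma maxFn_nonneg {μ : Measure X} {p s : ℝ} {f : X → ℝ} (hf : ∀ z, 0 ≤ f z) (x : X) :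
    0 ≤ maxFn μ p s f x :=
  Real.iSup_nonneg fun _ =>
    Real.rpow_nonneg (average_nonneg fun z => Real.rpow_nonneg (hf z) p) _

lemma maxFn_le_add_const {μ : Measure X} (hμ : NondegBalls μ) {p s ε : ℝ} (hp : 1 ≤ p)
    (hs : 0 < s) (hε : 0 ≤ ε) {g h : X → ℝ} (hg : ∀ z, 0 ≤ g z) (hh : ∀ z, 0 ≤ h z)
    (hgm : Measurable g) (hle : ∀ z, h z ≤ g z + ε) {x : X}
    (hgi : ∀ r, IntegrableOn (fun z => g z ^ p) (ball x r) μ) (hb : MaxBdd μ p s g x) :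
    maxFn μ p s h x ≤ maxFn μ p s g x + ε := by
  have : Nonempty (Set.Ioc (0:ℝ) s) := ⟨⟨s, hs, le_rfl⟩⟩
  refine ciSup_le fun r => le_trans ?_ (add_le_add_left (le_ciSup hb r) ε)
  have h0 := (hμ x r.1 r.2.1).1.ne'
  have h1 := (hμ x r.1 r.2.1).2.ne
  have : IsProbabilityMeasure
      ((μ.restrict (ball x r.1) univ)⁻¹ • μ.restrict (ball x r.1)) := by
    constructor
    simp [ENNReal.inv_mul_cancel h0 h1]
  refine rpow_integral_add_const_le hp hε hg hh hgm.aestronglyMeasurable hle ?_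
  exact (hgi r.1).smul_measure (by simpa using h0)

lemma maxBdd_of_le [BorelSpace X] {μ : Measure X} (hμ : NondegBalls μ) {p s : ℝ} (hp : 1 ≤ p)
    {g : X → ℝ} (hg : ∀ z, 0 ≤ g z) {x : X}
    (hgi : ∀ r, IntegrableOn (fun z => g z ^ p) (ball x r) μ) {ρ K : ℝ} (hρ : 0 < ρ)
    (hK : ∀ z ∈ ball x ρ, g z ≤ K) : MaxBdd μ p s g x := by
  have hp0 : 0 < p := by linarith
  have hK0 : 0 ≤ K := (hg x).trans (hK x (mem_ball_self hρ))
  have hpos : ∀ z, 0 ≤ g z ^ p := fun z => Real.rpow_nonneg (hg z) p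
  have hm : ∀ r, 0 < r → 0 < μ.real (ball x r) := fun r hr =>
    ENNReal.toReal_pos (hμ x r hr).1.ne' (hμ x r hr).2.ne
  set J := ∫ z in ball x s, g z ^ p ∂μ
  have hJ : 0 ≤ J := integral_nonneg hpos
  refine ⟨max (K ^ p) ((μ.real (ball x ρ))⁻¹ * J) ^ (1/p), ?_⟩
  rintro _ ⟨⟨r, hr0, hrs⟩, rfl⟩
  refine Real.rpow_le_rpow (average_nonneg hpos) ?_ (by positivity)
  simp only [setAverage_eq, smul_eq_mul]
  rcases le_total r ρ with hr | hr
  · refine le_trans ?_ (le_max_left _ _)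
    rw [inv_mul_le_iff₀ (hm r hr0)]
    have hfin := (hμ x r hr0).2
    have : IsFiniteMeasure (μ.restrict (ball x r)) := ⟨by simpa using hfin⟩
    have : ∫ z in ball x r, g z ^ p ∂μ ≤ ∫ z in ball x r, K ^ p ∂μ :=
      setIntegral_mono_on (hgi r) (integrable_const _) measurableSet_ball fun z hz =>
        Real.rpow_le_rpow (hg z) (hK z (ball_subset_ball hr hz)) hp0.le
    simpa using this
  · refine le_trans ?_ (le_max_right _ _)
    refine mul_le_mul (inv_anti₀ (hm ρ hρ) ?_) ?_ (integral_nonneg hpos)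
      (inv_nonneg.2 measureReal_nonneg)
    · exact measureReal_mono (ball_subset_ball hr) (hμ x r hr0).2.ne
    · exact setIntegral_mono_set (hgi s) (Eventually.of_forall hpos)
        (ball_subset_ball hrs).eventuallyLE

end MaxFn

/-! ### Lipschitz approximation from below -/

section LipApprox

variable [MetricSpace X]

/-- The largest `k`-Lipschitz minorant of `min g k`. -/
def lipApprox (g : X → ℝ) (k : ℕ) (z : X) : ℝ :=
  ⨅ w, (min (g w) k + k * dist z w)

variable {g : X → ℝ}

lemma lipApprox_bddBelow (hg : ∀ z, 0 ≤ g z) (k : ℕ) (z : X) :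
    BddBelow (range fun w => min (g w) k + k * dist z w) := by
  refine ⟨0, ?_⟩
  rintro _ ⟨w, rfl⟩
  have := hg w
  positivity

lemma lipApprox_le_of (hg : ∀ z, 0 ≤ g z) (k : ℕ) (z w : X) :
    lipApprox g k z ≤ min (g w) k + k * dist z w :=
  ciInf_le (lipApprox_bddBelow hg k z) w

lemma lipApprox_nonneg (hg : ∀ z, 0 ≤ g z) (k : ℕ) (z : X) : 0 ≤ lipApprox g k z :=
  Real.iInf_nonneg fun w => by have := hg w; positivity

lemma lipApprox_le_min (hg : ∀ z, 0 ≤ g z) (k : ℕ) (z : X) :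
    lipApprox g k z ≤ min (g z) k := by
  simpa using lipApprox_le_of hg k z z

lemma lipApprox_mono (hg : ∀ z, 0 ≤ g z) (z : X) : Monotone fun k => lipApprox g k z := by
  intro k m hkm
  have : Nonempty X := ⟨z⟩
  refine le_ciInf fun w => (lipApprox_le_of hg k z w).trans ?_
  have : (k:ℝ) ≤ m := by exact_mod_cast hkm
  gcongr

lemma lipApprox_le_add (hg : ∀ z, 0 ≤ g z) (k : ℕ) (z w : X) :
    lipApprox g k z ≤ lipApprox g k w + k * dist z w := by
  rw [← sub_le_iff_le_add]
  have : Nonempty X := ⟨z⟩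
  refine le_ciInf fun u => ?_
  have h1 := lipApprox_le_of hg k z u
  have h2 := mul_le_mul_of_nonneg_left (dist_triangle z w u) (Nat.cast_nonneg (α := ℝ) k)
  linarith

lemma lipApprox_continuous (hg : ∀ z, 0 ≤ g z) (k : ℕ) : Continuous (lipApprox g k) := by
  refine (LipschitzWith.of_le_add_mul (k : NNReal) fun z w => ?_).continuous
  simpa using lipApprox_le_add hg k z w

lemma lipApprox_tendsto (hlsc : LowerSemicontinuous g) (hg : ∀ z, 0 ≤ g z) (z : X) :
    Tendsto (fun k => lipApprox g k z) atTop (𝓝 (g z)) := by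
  rw [tendsto_order]
  refine ⟨fun a ha => ?_, fun a ha => Eventually.of_forall fun k =>
    ((lipApprox_le_min hg k z).trans (min_le_left _ _)).trans_lt ha⟩
  obtain ⟨b, hab, hb⟩ := exists_between ha
  obtain ⟨ρ, hρ, hball⟩ := Metric.eventually_nhds_iff.1 (hlsc z b hb)
  filter_upwards [eventually_ge_atTop ⌈b⌉₊, eventually_ge_atTop ⌈b / ρ⌉₊] with k h1 h2
  have : Nonempty X := ⟨z⟩
  refine hab.trans_le (le_ciInf fun w => ?_)
  have h1' : b ≤ k := Nat.ceil_le.1 h1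
  have h2' : b ≤ k * ρ := (div_le_iff₀ hρ).1 (Nat.ceil_le.1 h2)
  have hgw := hg w
  rcases lt_or_ge (dist w z) ρ with h | h
  · have : b ≤ min (g w) k := le_min (hball h).le h1'
    have h3 : 0 ≤ (k:ℝ) * dist z w := by positivity
    linarith
  · rw [dist_comm] at h
    have h3 : (k:ℝ) * ρ ≤ k * dist z w := by gcongr
    have h4 : 0 ≤ min (g w) (k:ℝ) := by positivity
    linarith

end LipApprox

/-! ### Limits of almost-curves -/

section Limit

variable [MetricSpace X]

lemma IsAlmostCurve.dist_clamp_le {δ ℓ : ℝ} {x z : X} {σ : ℝ → X}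
    (hσ : IsAlmostCurve δ x z ℓ σ) (s t : ℝ) :
    dist (σ (max 0 (min s ℓ))) (σ (max 0 (min t ℓ))) ≤ |s - t| + δ := by
  have hmem : ∀ u : ℝ, 0 ≤ max 0 (min u ℓ) ∧ max 0 (min u ℓ) ≤ ℓ := fun u =>
    ⟨le_max_left _ _, max_le hσ.nonneg (min_le_right _ _)⟩
  have habs : |max 0 (min s ℓ) - max 0 (min t ℓ)| ≤ |s - t| := by
    have h1 := abs_max_sub_max_le_max 0 (min s ℓ) 0 (min t ℓ)
    have h2 := abs_min_sub_min_le_max s ℓ t ℓ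
    simp only [sub_self, abs_zero] at h1 h2
    rw [max_eq_right (abs_nonneg (min s ℓ - min t ℓ))] at h1
    rw [max_eq_left (abs_nonneg _)] at h2
    exact h1.trans h2
  rcases le_total (max 0 (min s ℓ)) (max 0 (min t ℓ)) with h | h
  · have h1 := hσ.dist_le _ _ (hmem s).1 h (hmem t).2
    have h2 := neg_abs_le (max 0 (min s ℓ) - max 0 (min t ℓ))
    linarith
  · have h1 := hσ.dist_le _ _ (hmem t).1 h (hmem s).2
    have h2 := le_abs_self (max 0 (min s ℓ) - max 0 (min t ℓ))
    rw [dist_comm]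
    linarith

/-- Arzelà–Ascoli for almost curves of bounded length whose defects tend to `0`. The limit is
taken pointwise along an ultrafilter; the uniform almost-Lipschitz bound upgrades this to uniform
convergence, which along the original sequence holds for frequently many indices. -/
lemma exists_limit_curve [ProperSpace X] {x y : X} {Λ : ℝ} {δ ℓ : ℕ → ℝ} {σ : ℕ → ℝ → X}
    (hσ : ∀ k, IsAlmostCurve (δ k) x y (ℓ k) (σ k)) (hℓ : ∀ k, ℓ k ≤ Λ)
    (hδ : Tendsto δ atTop (𝓝 0)) :
    ∃ γ : Curve X, γ.Joins x y ∧ γ.len ≤ Λ ∧ ∀ η > 0, ∃ᶠ k in atTop,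
      γ.len - η ≤ ℓ k ∧ ∀ t, 0 ≤ t → t ≤ ℓ k → t ≤ γ.len → dist (γ.toFun t) (σ k t) ≤ η := by
  set U : Ultrafilter ℕ := hyperfilter ℕ with hU
  have hUle : (U : Filter ℕ) ≤ atTop := Nat.hyperfilter_le_atTop
  have hδU : Tendsto δ U (𝓝 0) := hδ.mono_left hUle
  set S : ℕ → ℝ → X := fun k t => σ k (max 0 (min t (ℓ k))) with hS
  have hSσ : ∀ k t, 0 ≤ t → t ≤ ℓ k → S k t = σ k t := fun k t h0 h1 => by
    simp only [hS, min_eq_left h1, max_eq_right h0]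
  have hSd : ∀ k s t, dist (S k s) (S k t) ≤ |s - t| + δ k := fun k s t =>
    (hσ k).dist_clamp_le s t
  have hS0 : ∀ k, S k 0 = x := fun k => by
    rw [hSσ k 0 le_rfl (hσ k).nonneg, (hσ k).source]
  have hSℓ : ∀ k, S k (ℓ k) = y := fun k => by
    rw [hSσ k _ (hσ k).nonneg le_rfl, (hσ k).target]
  obtain ⟨l, hl, hlim⟩ : ∃ l ∈ Icc 0 Λ, Tendsto ℓ U (𝓝 l) := by
    refine isCompact_Icc.ultrafilter_le_nhds (U.map ℓ) ?_
    exact tendsto_principal.2 (Eventually.of_forall fun k => ⟨(hσ k).nonneg, hℓ k⟩)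
  have hex : ∀ t, ∃ a, Tendsto (fun k => S k t) U (𝓝 a) := by
    intro t
    obtain ⟨a, -, ha⟩ := (isCompact_closedBall x (|t| + 1)).ultrafilter_le_nhds
      (U.map fun k => S k t) (by
        refine tendsto_principal.2 ?_
        filter_upwards [hδU.eventually (gt_mem_nhds one_pos)] with k hk
        have := hSd k t 0
        rw [hS0, sub_zero] at this
        rw [mem_closedBall]
        linarith)
    exact ⟨a, ha⟩
  choose γ hγ using hex
  have hγd : ∀ s t, dist (γ s) (γ t) ≤ |s - t| := by
    intro s t
    have h1 := (tendsto_const_nhds (x := |s - t|)).add hδU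
    rw [add_zero] at h1
    exact le_of_tendsto_of_tendsto' ((hγ s).dist (hγ t)) h1 fun k => hSd k s t
  refine ⟨⟨l, hl.1, γ, LipschitzOnWith.of_dist_le_mul fun s _ t _ => by
    simpa [Real.dist_eq] using hγd s t⟩, ⟨?_, ?_⟩, hl.2, ?_⟩
  · exact tendsto_nhds_unique (hγ 0) (by simp only [hS0]; exact tendsto_const_nhds)
  · change γ l = y
    have h1 : Tendsto (fun k => |l - ℓ k| + δ k) U (𝓝 0) := by
      simpa using ((tendsto_const_nhds (x := l)).sub hlim).abs.add hδU
    have h2 : dist (γ l) y ≤ 0 :=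
      le_of_tendsto_of_tendsto' ((hγ l).dist (tendsto_const_nhds (x := y))) h1 fun k => by
        have := hSd k l (ℓ k)
        rwa [hSℓ] at this
    exact dist_le_zero.1 h2
  · intro η hη
    refine Frequently.filter_mono (Eventually.frequently (f := (U : Filter ℕ)) ?_) hUle
    obtain ⟨T, -, hTfin, hT⟩ := (isCompact_Icc (a := (0:ℝ)) (b := Λ)).finite_cover_balls
      (show 0 < η / 4 by positivity)
    have hev : ∀ᶠ k in (U : Filter ℕ), ∀ s ∈ T, dist (S k s) (γ s) < η / 4 :=
      (eventually_all_finite hTfin).2 fun s _ =>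
        (Metric.tendsto_nhds.1 (hγ s)) _ (by positivity)
    filter_upwards [hev, hδU.eventually (gt_mem_nhds (show 0 < η / 4 by positivity)),
      hlim.eventually (lt_mem_nhds (show l - η < l by linarith))] with k h1 h2 h3
    refine ⟨h3.le, fun t ht0 htk _ => ?_⟩
    obtain ⟨s, hs, hts⟩ := mem_iUnion₂.1 (hT ⟨ht0, htk.trans (hℓ k)⟩)
    rw [mem_ball, Real.dist_eq] at hts
    rw [← hSσ k t ht0 htk]
    have a1 := hγd t s
    have a2 := h1 s hs
    have a3 := hSd k t s
    rw [dist_comm] at a2 a3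
    have a4 := dist_triangle4 (γ t) (γ s) (S k s) (S k t)
    linarith

/-- Lower semicontinuity of `∫ g ds` along the limits produced by `exists_limit_curve`, for
integrands that increase to `g`. -/
lemma exists_curve_integral_le [ProperSpace X] {x y : X} {Λ B : ℝ} (hΛ : 0 ≤ Λ) (hB : 0 ≤ B)
    {g : X → ℝ} (hlsc : LowerSemicontinuous g) (hg : ∀ z, 0 ≤ g z)
    {δ ℓ b : ℕ → ℝ} {σ : ℕ → ℝ → X}
    (hσ : ∀ k, IsAlmostCurve (δ k) x y (ℓ k) (σ k)) (hℓ : ∀ k, ℓ k ≤ Λ)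
    (hδ : Tendsto δ atTop (𝓝 0)) (hb : Tendsto b atTop (𝓝 B))
    (hi : ∀ k, IntervalIntegrable (fun t => lipApprox g k (σ k t)) volume 0 (ℓ k))
    (hle : ∀ k, ∫ t in (0:ℝ)..ℓ k, lipApprox g k (σ k t) ≤ b k) :
    ∃ γ : Curve X, γ.Joins x y ∧ γ.len ≤ Λ ∧ γ.integral g ≤ B := by
  obtain ⟨γ, hγ, hlen, happ⟩ := exists_limit_curve hσ hℓ hδ
  refine ⟨γ, hγ, hlen, ?_⟩
  have hγi : ∀ m, IntervalIntegrable (fun t => lipApprox g m (γ.toFun t)) volume 0 γ.len :=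
    fun m => γ.intervalIntegrable (lipApprox_continuous hg m)
  have key : ∀ m, ∫ t in (0:ℝ)..γ.len, lipApprox g m (γ.toFun t) ≤ B := by
    intro m
    refine le_of_forall_pos_le_add fun η hη => ?_
    set θ : ℝ := η / 2 / (m * Λ + m + 1) with hθ
    have hden : 0 < (m:ℝ) * Λ + m + 1 := by positivity
    have hθ0 : 0 < θ := by positivity
    have hθη : θ * (m * Λ + m + 1) = η / 2 := div_mul_cancel₀ _ hden.ne'
    obtain ⟨k, ⟨hk1, hk2⟩, hkm, hkb⟩ := ((happ θ hθ0).and_eventually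
      ((eventually_ge_atTop m).and (hb.eventually
        (gt_mem_nhds (show B < B + η / 2 by linarith))))).exists
    set u := min (ℓ k) γ.len with hu
    have hu0 : 0 ≤ u := le_min (hσ k).nonneg γ.len_nonneg
    have hul : u ≤ γ.len := min_le_right _ _
    have huk : u ≤ ℓ k := min_le_left _ _
    have huθ : γ.len - u ≤ θ := by
      rcases min_cases (ℓ k) γ.len with h | h <;> rw [hu, h.1] <;> linarith
    have i1 := (hγi m).mono_set (c := 0) (d := u)
      (by rw [uIcc_of_le hu0, uIcc_of_le γ.len_nonneg]; exact Icc_subset_Icc_right hul)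
    have i2 := (hγi m).mono_set (c := u) (d := γ.len)
      (by rw [uIcc_of_le hul, uIcc_of_le γ.len_nonneg]; exact Icc_subset_Icc_left hu0)
    have j1 := (hi k).mono_set (c := 0) (d := u)
      (by rw [uIcc_of_le hu0, uIcc_of_le (hσ k).nonneg]; exact Icc_subset_Icc_right huk)
    have j2 := (hi k).mono_set (c := u) (d := ℓ k)
      (by rw [uIcc_of_le huk, uIcc_of_le (hσ k).nonneg]; exact Icc_subset_Icc_left hu0)
    have e1 := intervalIntegral.integral_add_adjacent_intervals i1 i2
    have e2 := intervalIntegral.integral_add_adjacent_intervals j1 j2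
    have b1 : ∫ t in u..γ.len, lipApprox g m (γ.toFun t) ≤ m * θ := by
      have : ∫ t in u..γ.len, lipApprox g m (γ.toFun t) ≤ ∫ _ in u..γ.len, (m:ℝ) :=
        intervalIntegral.integral_mono_on hul i2 intervalIntegrable_const fun t _ =>
          (lipApprox_le_min hg m _).trans (min_le_right _ _)
      rw [intervalIntegral.integral_const, smul_eq_mul] at this
      nlinarith [Nat.cast_nonneg (α := ℝ) m]
    have b2 : 0 ≤ ∫ t in u..ℓ k, lipApprox g k (σ k t) :=
      intervalIntegral.integral_nonneg huk fun t _ => lipApprox_nonneg hg k _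
    have b3 : ∫ t in (0:ℝ)..u, lipApprox g m (γ.toFun t) ≤
        (∫ t in (0:ℝ)..u, lipApprox g k (σ k t)) + m * θ * Λ := by
      have : ∫ t in (0:ℝ)..u, lipApprox g m (γ.toFun t) ≤
          ∫ t in (0:ℝ)..u, (lipApprox g k (σ k t) + m * θ) := by
        refine intervalIntegral.integral_mono_on hu0 i1 (j1.add intervalIntegrable_const)
          fun t ht => ?_
        have c1 := lipApprox_le_add hg m (γ.toFun t) (σ k t)
        have c2 := hk2 t ht.1 (ht.2.trans huk) (ht.2.trans hul)
        have c3 := lipApprox_mono hg (σ k t) hkm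
        have c4 := mul_le_mul_of_nonneg_left c2 (Nat.cast_nonneg (α := ℝ) m)
        simp only at c3
        linarith
      rw [intervalIntegral.integral_add j1 intervalIntegrable_const,
        intervalIntegral.integral_const, smul_eq_mul, sub_zero] at this
      have c5 : u * (m * θ) ≤ Λ * (m * θ) :=
        mul_le_mul_of_nonneg_right (huk.trans (hℓ k)) (by positivity)
      linarith
    have b4 := hle k
    nlinarith
  by_cases hgint : IntegrableOn (fun t => g (γ.toFun t)) (Icc 0 γ.len)
  · have hconv := integral_tendsto_of_tendsto_of_monotone
      (f := fun m t => lipApprox g m (γ.toFun t)) (μ := volume.restrict (Icc 0 γ.len))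
      (fun m => (intervalIntegrable_iff_integrableOn_Icc_of_le γ.len_nonneg).1 (hγi m)) hgint
      (Eventually.of_forall fun t => lipApprox_mono hg _)
      (Eventually.of_forall fun t => lipApprox_tendsto hlsc hg _)
    refine le_of_tendsto' hconv fun m => ?_
    have := key m
    rwa [intervalIntegral.integral_of_le γ.len_nonneg, ← integral_Icc_eq_integral_Ioc] at this
  · rw [Curve.integral, integral_undef hgint]
    exact hB

end Limit

/-! ### Points with finite maximal functions -/

lemma exists_curve_of_maxBdd [MetricSpace X] [ProperSpace X] [MeasurableSpace X] [BorelSpace X]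
    {μ : Measure X} (hμ : NondegBalls μ) {p C CPPI : ℝ} (hp : 1 ≤ p) (hC : 0 < C)
    (hCPPI : 0 < CPPI) (hPt : PtPI μ p C CPPI) {x y : X} (hxy : x ≠ y) {g : X → ℝ}
    (hlsc : LowerSemicontinuous g) (hg : ∀ z, 0 ≤ g z)
    (hgi : ∀ z r, IntegrableOn (fun z => g z ^ p) (ball z r) μ)
    (hbx : MaxBdd μ p (C * dist x y) g x) (hby : MaxBdd μ p (C * dist x y) g y) :
    ∃ γ : Curve X, γ.Joins x y ∧ γ.len ≤ 9 / 2 * (CPPI * dist x y) ∧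
      γ.integral g ≤ 4 * CPPI * dist x y *
        (maxFn μ p (C * dist x y) g x + maxFn μ p (C * dist x y) g y) := by
  have hd : 0 < dist x y := dist_pos.2 hxy
  set A := CPPI * dist x y with hA
  have hA0 : 0 < A := mul_pos hCPPI hd
  set s := C * dist x y with hs
  have hs0 : 0 < s := mul_pos hC hd
  set τ := maxFn μ p s g x + maxFn μ p s g y with hτ
  have hτ0 : 0 ≤ τ := add_nonneg (maxFn_nonneg hg x) (maxFn_nonneg hg y)
  set δ : ℕ → ℝ := fun k => 1 / ((k:ℝ) + 1) with hδ
  have hδ0 : ∀ k, 0 < δ k := fun k => by positivity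
  have hδlim : Tendsto δ atTop (𝓝 0) := tendsto_one_div_add_atTop_nhds_zero_nat
  -- Adding `ε k` to the integrand bounds the length of a curve by its cost; the choice
  -- `ε k ≥ τ / 2` makes that length bound uniform.
  set ε : ℕ → ℝ := fun k => τ / 2 + δ k with hε
  have hε0 : ∀ k, 0 < ε k := fun k => by have := hδ0 k; positivity
  set N : ℕ → ℝ := fun k => A * (τ + 2 * ε k) + A * ε k / 2 with hN
  have hreach : ∀ k, Reach (δ k) (fun z => lipApprox g k z + ε k) x y (N k) := by
    intro k
    have hh : ∀ z, 0 ≤ lipApprox g k z + ε k := fun z =>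
      add_nonneg (lipApprox_nonneg hg k z) (hε0 k).le
    have hm : ∀ z, MaxBdd μ p s g z →
        maxFn μ p s (fun z => lipApprox g k z + ε k) z ≤ maxFn μ p s g z + ε k := fun z hz =>
      maxFn_le_add_const hμ hp hs0 (hε0 k).le hg hh hlsc.measurable
        (fun w => by have := (lipApprox_le_min hg k w).trans (min_le_left _ _); linarith)
        (hgi z) hz
    have hε' := hε0 k
    refine hPt.reach (h := fun z => lipApprox g k z + ε k) hxy
      ((lipApprox_continuous hg k).add continuous_const) hh
      (K := k + ε k) (fun z => ?_) (hδ0 k) (by positivity) ?_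
    · have := (lipApprox_le_min hg k z).trans (min_le_right _ _)
      linarith
    · have h1 := hm x hbx
      have h2 := hm y hby
      have h3 : A * (maxFn μ p s (fun z => lipApprox g k z + ε k) x +
          maxFn μ p s (fun z => lipApprox g k z + ε k) y) ≤ A * (τ + 2 * ε k) :=
        mul_le_mul_of_nonneg_left (by linarith) hA0.le
      have h4 : 0 < A * ε k := mul_pos hA0 hε'
      simp only [hN]
      linarith
  choose ℓ σ hσ hi hle using hreach
  have hi' : ∀ k, IntervalIntegrable (fun t => lipApprox g k (σ k t)) volume 0 (ℓ k) := fun k => by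
    simpa using (hi k).sub (intervalIntegrable_const (c := ε k))
  have hsum : ∀ k, (∫ t in (0:ℝ)..ℓ k, lipApprox g k (σ k t)) + ℓ k * ε k ≤ N k := fun k => by
    have := hle k
    rwa [intervalIntegral.integral_add (hi' k) intervalIntegrable_const,
      intervalIntegral.integral_const, smul_eq_mul, sub_zero] at this
  have hℓ : ∀ k, ℓ k ≤ 9 / 2 * A := by
    intro k
    have h1 : 0 ≤ ∫ t in (0:ℝ)..ℓ k, lipApprox g k (σ k t) :=
      intervalIntegral.integral_nonneg (hσ k).nonneg fun t _ => lipApprox_nonneg hg k _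
    have h2 : N k ≤ 9 / 2 * A * ε k := by
      have h3 : τ ≤ 2 * ε k := by have := hδ0 k; simp only [hε]; linarith
      have h4 := mul_le_mul_of_nonneg_left h3 hA0.le
      simp only [hN]
      linarith
    exact le_of_mul_le_mul_right (by linarith [hsum k]) (hε0 k)
  have hNlim : Tendsto N atTop (𝓝 (9 / 4 * A * τ)) := by
    have h1 : Tendsto ε atTop (𝓝 (τ / 2 + 0)) := tendsto_const_nhds.add hδlim
    have h2 := (((h1.const_mul 2).const_add τ).const_mul A).add ((h1.const_mul A).div_const 2)
    convert h2 using 2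
    ring
  obtain ⟨γ, h1, h2, h3⟩ := exists_curve_integral_le (by positivity)
    (show 0 ≤ 9 / 4 * A * τ by positivity) hlsc hg hσ hℓ hδlim hNlim hi' fun k => by
      have := hsum k
      have := mul_nonneg (hσ k).nonneg (hε0 k).le
      linarith
  refine ⟨γ, h1, h2, h3.trans ?_⟩
  have : 0 ≤ A * τ := by positivity
  have e : 4 * CPPI * dist x y = 4 * A := by rw [hA]; ring
  rw [e]
  linarith

/-! ### Points with infinite maximal functions -/

section Loops

variable [MetricSpace X]

/-- Concatenation of two curves. -/
def Curve.append (γ₁ γ₂ : Curve X) (h : γ₁.toFun γ₁.len = γ₂.toFun 0) : Curve X where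
  len := γ₁.len + γ₂.len
  len_nonneg := add_nonneg γ₁.len_nonneg γ₂.len_nonneg
  toFun := glue γ₁.toFun γ₁.len γ₂.toFun
  lipschitz := by
    have key := dist_glue_le (δ := 0) (L := γ₂.len) h
      (fun s t hs hst ht => by simpa using γ₁.dist_le hs hst ht)
      (fun t h0 ht => by simpa using γ₂.dist_le le_rfl h0 ht)
      (fun s t hs hst ht => by simpa using γ₂.dist_le hs hst ht)
    refine LipschitzOnWith.of_dist_le_mul fun s hs t ht => ?_
    rw [NNReal.coe_one, one_mul, Real.dist_eq]
    rcases le_total s t with hst | hst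
    · rw [abs_sub_comm, abs_of_nonneg (sub_nonneg.2 hst)]
      simpa using key s t hs.1 hst ht.2
    · rw [abs_of_nonneg (sub_nonneg.2 hst), dist_comm]
      simpa using key t s ht.1 hst hs.2

lemma Curve.append_joins {γ₁ γ₂ : Curve X} {x y z : X} (h₁ : γ₁.Joins x y) (h₂ : γ₂.Joins y z) :
    (γ₁.append γ₂ (h₁.2.trans h₂.1.symm)).Joins x z := by
  refine ⟨?_, ?_⟩
  · change glue γ₁.toFun γ₁.len γ₂.toFun 0 = x
    rw [glue_left γ₁.len_nonneg, h₁.1]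
  · change glue γ₁.toFun γ₁.len γ₂.toFun (γ₁.len + γ₂.len) = z
    rw [glue_right (h₁.2.trans h₂.1.symm) (by linarith [γ₂.len_nonneg]), add_sub_cancel_left,
      h₂.2]

/-- If `g` is not integrable along one of two curves, it is not integrable along their
concatenation, whose Bochner integral then takes the junk value `0`. -/
lemma Curve.append_integral_eq_zero {γ₁ γ₂ : Curve X} (h : γ₁.toFun γ₁.len = γ₂.toFun 0)
    {g : X → ℝ} (hn : ¬ IntervalIntegrable (fun t => g (γ₁.toFun t)) volume 0 γ₁.len ∨
      ¬ IntervalIntegrable (fun t => g (γ₂.toFun t)) volume 0 γ₂.len) :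
    (γ₁.append γ₂ h).integral g = 0 := by
  rw [Curve.integral_eq]
  refine intervalIntegral.integral_undef fun H => ?_
  change IntervalIntegrable (fun t => g (glue γ₁.toFun γ₁.len γ₂.toFun t)) volume 0
    (γ₁.len + γ₂.len) at H
  have l1 := γ₁.len_nonneg
  have l2 := γ₂.len_nonneg
  rcases hn with hn | hn
  · refine hn ((intervalIntegrable_congr ?_).1 (H.mono_set (c := 0) (d := γ₁.len) ?_))
    · intro t ht
      rw [uIoc_of_le l1] at ht
      simp only [glue_left ht.2]
    · rw [uIcc_of_le l1, uIcc_of_le (by linarith)]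
      exact Icc_subset_Icc_right (by linarith)
  · have H2 := (H.mono_set (c := γ₁.len) (d := γ₁.len + γ₂.len) (by
      rw [uIcc_of_le (by linarith), uIcc_of_le (by linarith)]
      exact Icc_subset_Icc_left l1)).comp_add_right γ₁.len
    rw [sub_self, add_sub_cancel_left] at H2
    refine hn ((intervalIntegrable_congr ?_).1 H2)
    intro t ht
    rw [uIoc_of_le l2] at ht
    simp only [glue_right h (by linarith [ht.1] : γ₁.len ≤ t + γ₁.len), add_sub_cancel_right]

/-- In a quasiconvex space, a function unbounded near `q` is not integrable along some loop at `q`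
of arbitrarily small length `s`. On the dyadic interval `(s / 2 ^ (n + 1), s / 2 ^ n)` the loop
runs to a point `z n` close to `q` where `g` is huge, rests there for half of the time, and runs
back to `q`. -/
lemma exists_bad_loop {Q : ℝ} (hQ0 : 0 < Q)
    (hQ : ∀ a b : X, ∃ γ : Curve X, γ.Joins a b ∧ γ.len ≤ Q * dist a b)
    {g : X → ℝ} (hg : ∀ z, 0 ≤ g z) {q : X}
    (hunb : ∀ ρ > 0, ∀ K : ℝ, ∃ z ∈ ball q ρ, K < g z) {s : ℝ} (hs : 0 < s) :
    ∃ γ : Curve X, γ.Joins q q ∧ γ.len = s ∧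
      ¬ IntervalIntegrable (fun t => g (γ.toFun t)) volume 0 γ.len := by
  set a : ℕ → ℝ := fun n => s * (1 / 2) ^ n with ha
  have ha0 : ∀ n, 0 < a n := fun n => by positivity
  have ha1 : ∀ n, a n = 2 * a (n + 1) := fun n => by simp only [ha, pow_succ]; ring
  have hanti : Antitone a := antitone_nat_of_succ_le fun n => by linarith [ha1 n, ha0 (n + 1)]
  have haz : a 0 = s := by simp [ha]
  have hz : ∀ n, ∃ z ∈ ball q (a (n + 1) / 4 / Q), n / a (n + 1) < g z := fun n =>
    hunb _ (by have := ha0 (n + 1); positivity) _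
  choose z hzb hzg using hz
  choose c hcj hcl using fun n => hQ q (z n)
  have hcl' : ∀ n, (c n).len ≤ a (n + 1) / 4 := fun n => by
    have h1 := hzb n
    rw [mem_ball, dist_comm, lt_div_iff₀ hQ0] at h1
    linarith [hcl n]
  set D : ℕ → ℝ → ℝ := fun n t => min (t - a (n + 1)) (a n - t) with hD
  classical
  set f : ℝ → X := fun t =>
    if h : ∃ n, t ∈ Ioo (a (n + 1)) (a n) then
      (c h.choose).toFun (min (D h.choose t) (c h.choose).len)
    else q with hf
  have huniq : ∀ {n m t}, t ∈ Ioo (a (n + 1)) (a n) → t ∈ Ioo (a (m + 1)) (a m) → n = m := by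
    intro n m t h1 h2
    by_contra hne
    rcases Nat.lt_or_gt_of_ne hne with h | h
    · have := hanti (Nat.succ_le_of_lt h)
      simp only [Nat.succ_eq_add_one] at this
      linarith [h1.1, h2.2]
    · have := hanti (Nat.succ_le_of_lt h)
      simp only [Nat.succ_eq_add_one] at this
      linarith [h1.2, h2.1]
  have hfin : ∀ {n t}, t ∈ Ioo (a (n + 1)) (a n) →
      f t = (c n).toFun (min (D n t) (c n).len) := by
    intro n t ht
    have h : ∃ n, t ∈ Ioo (a (n + 1)) (a n) := ⟨n, ht⟩
    have e : h.choose = n := huniq h.choose_spec ht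
    simp only [hf, dif_pos h, e]
  have hfout : ∀ {t}, (¬ ∃ n, t ∈ Ioo (a (n + 1)) (a n)) → f t = q := fun h => dif_neg h
  have hDpos : ∀ {n t}, t ∈ Ioo (a (n + 1)) (a n) → 0 < D n t := fun h =>
    lt_min (sub_pos.2 h.1) (sub_pos.2 h.2)
  have hfq : ∀ {n t}, t ∈ Ioo (a (n + 1)) (a n) → dist q (f t) ≤ D n t := by
    intro n t ht
    rw [hfin ht]
    have := (c n).dist_le le_rfl (le_min (hDpos ht).le (c n).len_nonneg) (min_le_right _ _)
    rw [(hcj n).1, sub_zero] at this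
    exact this.trans (min_le_left _ _)
  have hD1 : ∀ n t, D n t ≤ t - a (n + 1) := fun n t => min_le_left _ _
  have hD2 : ∀ n t, D n t ≤ a n - t := fun n t => min_le_right _ _
  have hdist : ∀ u v, u ≤ v → dist (f u) (f v) ≤ v - u := by
    intro u v huv
    by_cases hu : ∃ n, u ∈ Ioo (a (n + 1)) (a n)
    · obtain ⟨n, hn⟩ := hu
      by_cases hv : ∃ m, v ∈ Ioo (a (m + 1)) (a m)
      · obtain ⟨m, hm⟩ := hv
        rcases eq_or_ne n m with rfl | hne
        · rw [hfin hn, hfin hm]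
          have h1 := (c n).lipschitz.dist_le_mul (min (D n u) (c n).len)
            ⟨le_min (hDpos hn).le (c n).len_nonneg, min_le_right _ _⟩
            (min (D n v) (c n).len) ⟨le_min (hDpos hm).le (c n).len_nonneg, min_le_right _ _⟩
          rw [NNReal.coe_one, one_mul, Real.dist_eq] at h1
          have h2 := abs_min_sub_min_le_max (D n u) (c n).len (D n v) (c n).len
          have h3 := abs_min_sub_min_le_max (u - a (n + 1)) (a n - u) (v - a (n + 1)) (a n - v)
          have h4 : |u - a (n + 1) - (v - a (n + 1))| = v - u := by
            rw [sub_sub_sub_cancel_right, abs_sub_comm, abs_of_nonneg (by linarith)]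
          have h5 : |a n - u - (a n - v)| = v - u := by
            rw [sub_sub_sub_cancel_left, abs_of_nonneg (by linarith)]
          rw [h4, h5, max_self] at h3
          rw [sub_self, abs_zero, max_eq_left (abs_nonneg _)] at h2
          exact h1.trans (h2.trans h3)
        · have hmn : m < n := by
            by_contra hlt
            have := hanti (Nat.succ_le_of_lt (lt_of_le_of_ne (not_lt.1 hlt) hne))
            simp only [Nat.succ_eq_add_one] at this
            linarith [hn.1, hm.2]
          have h1 := hanti (Nat.succ_le_of_lt hmn)
          simp only [Nat.succ_eq_add_one] at h1
          have h2 := dist_triangle_left (f u) (f v) q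
          linarith [hfq hn, hfq hm, hD2 n u, hD1 m v]
      · rw [hfout hv, dist_comm]
        have h1 : a n ≤ v := by
          by_contra hlt
          exact hv ⟨n, hn.1.trans_le huv, not_le.1 hlt⟩
        linarith [hfq hn, hD2 n u]
    · rw [hfout hu]
      by_cases hv : ∃ m, v ∈ Ioo (a (m + 1)) (a m)
      · obtain ⟨m, hm⟩ := hv
        have h1 : u ≤ a (m + 1) := by
          by_contra hlt
          exact hu ⟨m, not_le.1 hlt, huv.trans_lt hm.2⟩
        linarith [hfq hm, hD1 m v]
      · rw [hfout hv, dist_self]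
        linarith
  refine ⟨⟨s, hs.le, f, LipschitzOnWith.of_dist_le_mul fun u _ v _ => ?_⟩, ⟨?_, ?_⟩, rfl, ?_⟩
  · rw [NNReal.coe_one, one_mul, Real.dist_eq]
    rcases le_total u v with h | h
    · rw [abs_sub_comm, abs_of_nonneg (by linarith)]
      exact hdist u v h
    · rw [abs_of_nonneg (by linarith), dist_comm]
      exact hdist v u h
  · refine hfout ?_
    rintro ⟨n, hn⟩
    exact lt_asymm hn.1 (ha0 _)
  · refine hfout ?_
    rintro ⟨n, hn⟩
    have := hanti (Nat.zero_le n)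
    rw [haz] at this
    linarith [hn.2]
  · intro H
    change IntervalIntegrable (fun t => g (f t)) volume 0 s at H
    obtain ⟨n, hn⟩ := exists_nat_gt (2 * ∫ t in (0:ℝ)..s, g (f t))
    have hw := ha0 (n + 1)
    have hn1 := ha1 n
    -- The resting interval of the loop around `z n`.
    set b₁ := a (n + 1) + a (n + 1) / 4 with hb₁
    set b₂ := a (n + 1) + 3 * a (n + 1) / 4 with hb₂
    have hb : b₁ ≤ b₂ := by linarith
    have hb₂s : b₂ ≤ s := by
      have := hanti (Nat.zero_le n)
      rw [haz] at this
      linarith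
    have hrest : EqOn (fun t => g (f t)) (fun _ => g (z n)) (uIcc b₁ b₂) := by
      intro t ht
      rw [uIcc_of_le hb] at ht
      have hmem : t ∈ Ioo (a (n + 1)) (a n) := ⟨by linarith [ht.1], by linarith [ht.2]⟩
      have : (c n).len ≤ D n t := (hcl' n).trans
        (le_min (by linarith [ht.1]) (by linarith [ht.2]))
      simp only [hfin hmem, min_eq_right this, (hcj n).2]
    have h1 : ∫ t in b₁..b₂, g (f t) ≤ ∫ t in (0:ℝ)..s, g (f t) :=
      intervalIntegral.integral_mono_interval (by linarith) hb hb₂s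
        (Eventually.of_forall fun t => hg _) H
    rw [intervalIntegral.integral_congr hrest, intervalIntegral.integral_const, smul_eq_mul] at h1
    have h2 := hzg n
    rw [div_lt_iff₀ hw] at h2
    have h3 : (b₂ - b₁) * g (z n) = g (z n) * a (n + 1) / 2 := by rw [hb₁, hb₂]; ring
    linarith

end Loops

/-! ### The theorem -/

/-- a Poincaré inequality together with the pointwise Poincaré
inequality implies `A_p`-connectivity with constants `(5·CPPI, 4·CPPI)`
(maximal functions at scale `C·r`). -/
theorem poincare_and_ptPI_implies_apConnected
    {X : Type*} [MetricSpace X] [ProperSpace X] [MeasurableSpace X] [BorelSpace X]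
    (μ : Measure X) (hμ : NondegBalls μ)
    (D p C CPI CPPI : ℝ) (hp : 1 ≤ p) (hD : 1 ≤ D) (hC : 0 < C)
    (hCPI : 0 < CPI) (hCPPI : 0 < CPPI)
    (hdbl : Doubling μ D) (hPI : Poincare μ p C CPI) (hPt : PtPI μ p C CPPI) :
    ∀ x y : X, x ≠ y → ∀ g : X → ℝ, LowerSemicontinuous g → (∀ z, 0 ≤ g z) →
      LocallyIntegrable (fun z => g z ^ p) μ →
      ∃ γ : Curve X, γ.Joins x y ∧ γ.len ≤ 5 * CPPI * dist x y ∧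
        γ.integral g ≤ 4 * CPPI * dist x y *
          (maxFn μ p (C * dist x y) g x + maxFn μ p (C * dist x y) g y) := by
  intro x y hxy g hlsc hg hloc
  have hd : 0 < dist x y := dist_pos.2 hxy
  have hA : 0 < CPPI * dist x y := mul_pos hCPPI hd
  have hgi : ∀ z r, IntegrableOn (fun z => g z ^ p) (ball z r) μ := fun z r =>
    (hloc.integrableOn_isCompact (isCompact_closedBall z r)).mono_set ball_subset_closedBall
  by_cases hb : MaxBdd μ p (C * dist x y) g x ∧ MaxBdd μ p (C * dist x y) g y
  · obtain ⟨γ, h1, h2, h3⟩ :=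
      exists_curve_of_maxBdd hμ hp hC hCPPI hPt hxy hlsc hg hgi hb.1 hb.2
    exact ⟨γ, h1, by linarith, h3⟩
  -- The case `g = 0` is quasiconvexity.
  have hQ : ∀ a b : X, ∃ γ : Curve X, γ.Joins a b ∧ γ.len ≤ 9 / 2 * CPPI * dist a b := by
    intro a b
    rcases eq_or_ne a b with rfl | hab
    · exact ⟨⟨0, le_rfl, fun _ => a, (LipschitzWith.const' a).lipschitzOnWith⟩, ⟨rfl, rfl⟩,
        by simp⟩
    have h0 : (fun _ : X => (0:ℝ) ^ p) = fun _ => 0 := by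
      rw [Real.zero_rpow (by linarith)]
    have hi0 : ∀ z r, IntegrableOn (fun _ : X => (0:ℝ) ^ p) (ball z r) μ := fun z r => by
      rw [h0]; exact integrableOn_zero
    have hb0 : ∀ z, MaxBdd μ p (C * dist a b) (fun _ => 0) z := fun z =>
      maxBdd_of_le hμ hp (fun _ => le_rfl) (hi0 z) one_pos fun _ _ => le_rfl
    obtain ⟨γ, h1, h2, -⟩ := exists_curve_of_maxBdd hμ hp hC hCPPI hPt hab
      lowerSemicontinuous_const (fun _ => le_rfl) hi0 (hb0 a) (hb0 b)
    exact ⟨γ, h1, by linarith⟩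
  have hloop : ∀ q, ¬ MaxBdd μ p (C * dist x y) g q → ∃ γ : Curve X, γ.Joins q q ∧
      γ.len = CPPI * dist x y / 2 ∧
      ¬ IntervalIntegrable (fun t => g (γ.toFun t)) volume 0 γ.len := by
    intro q hq
    refine exists_bad_loop (by positivity) hQ hg (fun ρ hρ K => ?_) (by positivity)
    by_contra! hK
    exact hq (maxBdd_of_le hμ hp hg (hgi q) hρ hK)
  have hRHS : 0 ≤ 4 * CPPI * dist x y *
      (maxFn μ p (C * dist x y) g x + maxFn μ p (C * dist x y) g y) :=
    mul_nonneg (by positivity) (add_nonneg (maxFn_nonneg hg x) (maxFn_nonneg hg y))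
  obtain ⟨γ, hγ, hγl⟩ := hQ x y
  rcases not_and_or.1 hb with hx | hy
  · obtain ⟨β, hβ, hβl, hβi⟩ := hloop x hx
    refine ⟨_, Curve.append_joins hβ hγ, ?_, ?_⟩
    · change β.len + γ.len ≤ _
      linarith
    · rw [Curve.append_integral_eq_zero _ (Or.inl hβi)]
      exact hRHS
  · obtain ⟨β, hβ, hβl, hβi⟩ := hloop y hy
    refine ⟨_, Curve.append_joins hγ hβ, ?_, ?_⟩
    · change γ.len + β.len ≤ _
      linarith
    · rw [Curve.append_integral_eq_zero _ (Or.inr hβi)]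
      exact hRHS

end
end

section
/- Let (X,d,μ) be a proper metric measure space with a Radon measure, let E ⊂ X be a Borel set, p ∈ [1,∞), s > 0, and x ∈ X. Then for every ε ∈ (0,1) there exists an open set O ⊂ X such that E \ {x} ⊂ O, x ∉ O, M_s 1_O(x) ≤ M_s 1_E(x) + ε, and M_{p,s} 1_{O \ E}(x) ≤ ε. -/
/-!
Exhaust `E \ {x}` by the finite-measure pieces `E ∩ {1/(n+1) < d(y,x) < n+1}`. Outer regularity gives
an open `U n` containing the `n`-th piece, itself inside the shell `{1/(n+1) < d(y,x) < n+1}`, whose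
excess over the piece has measure at most `δ n * μ (B(x, 1/(n+1)))`, where `∑ δ n ≤ η`. Put
`O = ⋃ n, U n`. A ball `B(x,r)` meets `U n` only if `1/(n+1) < r`, and then
`μ (B(x, 1/(n+1))) ≤ μ (B(x,r))`; summing over `n` gives `μ (B(x,r) ∩ (O \ E)) ≤ η * μ (B(x,r))`
for every `r > 0` (`exists_open_small_excess`). With `η = ε ^ p ≤ ε` this yields both
maximal function estimates, since the average of an indicator is a density (`average_indicator_rpow`).
-/

open MeasureTheory Metric Set Filter Topology

noncomputable section

variable {X : Type*}

/-- At every scale `r`, the excess `O \ E` has density at most `η` in the ball `B(x,r)`. -/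
theorem exists_open_small_excess
    {X : Type*} [MetricSpace X] [ProperSpace X] [MeasurableSpace X] [BorelSpace X]
    (μ : Measure X) (hμ : NondegBalls μ)
    (E : Set X) (hE : MeasurableSet E) (x : X) (η : ENNReal) (hη : η ≠ 0) :
    ∃ O : Set X, IsOpen O ∧ E \ {x} ⊆ O ∧ x ∉ O ∧
      ∀ r : ℝ, 0 < r → μ ((O \ E) ∩ ball x r) ≤ η * μ (ball x r) := by
  have : IsLocallyFiniteMeasure μ :=
    ⟨fun y => ⟨ball y 1, ball_mem_nhds y one_pos, (hμ y 1 one_pos).2⟩⟩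
  obtain ⟨δ, hδ, hsum⟩ := ENNReal.exists_pos_sum_of_countable hη ℕ
  have hpos : ∀ n : ℕ, (0:ℝ) < 1 / ((n:ℝ) + 1) := fun n => Nat.one_div_pos_of_nat
  let S : ℕ → Set X := fun n => {y | 1 / ((n:ℝ) + 1) < dist y x} ∩ ball x ((n:ℝ) + 1)
  have hSo : ∀ n, IsOpen (S n) := fun n =>
    (isOpen_lt continuous_const (continuous_id.dist continuous_const)).inter isOpen_ball
  have key : ∀ n : ℕ, ∃ U, E ∩ S n ⊆ U ∧ IsOpen U ∧
      μ (U \ (E ∩ S n)) < δ n * μ (ball x (1 / ((n:ℝ) + 1))) := by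
    intro n
    have hfin : μ (E ∩ S n) ≠ ⊤ :=
      ((measure_mono (fun y hy => hy.2.2)).trans_lt (hμ x ((n:ℝ) + 1) (by positivity)).2).ne
    obtain ⟨U, h1, h2, -, h3⟩ := (hE.inter (hSo n).measurableSet).exists_isOpen_sdiff_lt hfin
      (ε := δ n * μ (ball x (1 / ((n:ℝ) + 1))))
      (mul_ne_zero (by exact_mod_cast (hδ n).ne') (hμ x _ (hpos n)).1.ne')
    exact ⟨U, h1, h2, h3⟩
  choose U hU1 hU2 hU3 using key
  refine ⟨⋃ n, U n ∩ S n, isOpen_iUnion fun n => (hU2 n).inter (hSo n), ?_, ?_, ?_⟩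
  · rintro y ⟨hyE, hyx⟩
    have hd : 0 < dist y x := dist_pos.2 hyx
    obtain ⟨n, hn⟩ := exists_nat_one_div_lt hd
    obtain ⟨m, hm⟩ := exists_nat_gt (dist y x)
    have hyS : y ∈ S (max n m) := by
      refine ⟨lt_of_le_of_lt (Nat.one_div_le_one_div (le_max_left n m)) hn, ?_⟩
      have : (m:ℝ) ≤ ((max n m : ℕ) : ℝ) := by exact_mod_cast le_max_right n m
      rw [mem_ball]
      linarith
    exact mem_iUnion.2 ⟨max n m, hU1 _ ⟨hyE, hyS⟩, hyS⟩
  · intro hx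
    obtain ⟨n, -, hn, -⟩ := mem_iUnion.1 hx
    have := hpos n
    simp only [mem_ofPred_eq, dist_self] at hn
    linarith
  · intro r hr
    have hsub : ((⋃ n, U n ∩ S n) \ E) ∩ ball x r ⊆
        ⋃ n, ((U n ∩ S n) \ E) ∩ ball x r := by
      rintro y ⟨⟨hy, hyE⟩, hyr⟩
      obtain ⟨n, hn⟩ := mem_iUnion.1 hy
      exact mem_iUnion.2 ⟨n, ⟨hn, hyE⟩, hyr⟩
    calc _ ≤ ∑' n, μ (((U n ∩ S n) \ E) ∩ ball x r) :=
          (measure_mono hsub).trans (measure_iUnion_le _)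
      _ ≤ ∑' n, (δ n : ENNReal) * μ (ball x r) := by
          refine ENNReal.tsum_le_tsum fun n => ?_
          by_cases hn : 1 / ((n:ℝ) + 1) < r
          · refine (measure_mono ?_).trans ((hU3 n).le.trans ?_)
            · rintro y ⟨⟨⟨hy, -⟩, hyE⟩, -⟩
              exact ⟨hy, fun h => hyE h.1⟩
            · gcongr
          -- The shell `S n` lies outside `B(x, 1/(n+1))`, so small balls do not see `U n ∩ S n`.
          · have : ((U n ∩ S n) \ E) ∩ ball x r = ∅ := by
              rw [eq_empty_iff_forall_notMem]
              rintro y ⟨⟨⟨-, hy, -⟩, -⟩, hyr⟩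
              exact hn (lt_trans hy hyr)
            simp [this]
      _ = (∑' n, (δ n : ENNReal)) * μ (ball x r) := ENNReal.tsum_mul_right
      _ ≤ η * μ (ball x r) := by gcongr

theorem average_indicator_rpow
    {X : Type*} [MeasurableSpace X] (μ : Measure X) (A B : Set X) (hA : MeasurableSet A)
    (p : ℝ) (hp : 1 ≤ p) :
    ⨍ y in B, (A.indicator (fun _ => (1:ℝ)) y) ^ p ∂μ = μ.real (A ∩ B) / μ.real B := by
  have h : (fun y => (A.indicator (fun _ => (1:ℝ)) y) ^ p) = A.indicator (fun _ => (1:ℝ)) := by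
    funext y
    by_cases hy : y ∈ A
    · simp [hy]
    · simp [hy, Real.zero_rpow (by linarith : p ≠ 0)]
  rw [h, setAverage_eq, integral_indicator_const _ hA, measureReal_restrict_apply hA]
  simp [div_eq_inv_mul]

/-- open approximation of a Borel set (Lemma 3.2). -/
theorem open_approximation_of_set
    {X : Type*} [MetricSpace X] [ProperSpace X] [MeasurableSpace X] [BorelSpace X]
    (μ : Measure X) (hμ : NondegBalls μ)
    (E : Set X) (hE : MeasurableSet E)
    (p s : ℝ) (hp : 1 ≤ p) (hs : 0 < s) (x : X) :
    ∀ ε : ℝ, 0 < ε → ε < 1 →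
      ∃ O : Set X, IsOpen O ∧ E \ {x} ⊆ O ∧ x ∉ O ∧
        maxFn μ 1 s (Set.indicator O (fun _ => (1:ℝ))) x ≤
          maxFn μ 1 s (Set.indicator E (fun _ => (1:ℝ))) x + ε ∧
        maxFn μ p s (Set.indicator (O \ E) (fun _ => (1:ℝ))) x ≤ ε := by
  intro ε hε hε1
  have hεp : 0 < ε ^ p := Real.rpow_pos_of_pos hε p
  obtain ⟨O, hO, hEO, hxO, hdens⟩ := exists_open_small_excess μ hμ E hE x
    (ENNReal.ofReal (ε ^ p)) (by simpa using hεp)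
  have hfin : ∀ r : ℝ, 0 < r → ∀ A : Set X, μ (A ∩ ball x r) ≠ ⊤ := fun r hr A =>
    ((measure_mono inter_subset_right).trans_lt (hμ x r hr).2).ne
  have hball : ∀ r : ℝ, 0 < r → 0 < μ.real (ball x r) := fun r hr =>
    ENNReal.toReal_pos (hμ x r hr).1.ne' (hμ x r hr).2.ne
  have hdens' : ∀ r : ℝ, 0 < r → μ.real ((O \ E) ∩ ball x r) / μ.real (ball x r) ≤ ε ^ p := by
    intro r hr
    rw [div_le_iff₀ (hball r hr)]
    have h := ENNReal.toReal_mono (ENNReal.mul_ne_top ENNReal.ofReal_ne_top (hμ x r hr).2.ne)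
      (hdens r hr)
    rwa [ENNReal.toReal_mul, ENNReal.toReal_ofReal hεp.le] at h
  have : Nonempty (Set.Ioc (0:ℝ) s) := ⟨⟨s, hs, le_rfl⟩⟩
  refine ⟨O, hO, hEO, hxO, ?_, ?_⟩
  · unfold maxFn
    refine ciSup_le fun r => ?_
    have hr := r.2.1
    -- Boundedness by `1` makes the real-valued supremum for `E` an actual upper bound.
    have hbdd : BddAbove (range fun r : Set.Ioc (0:ℝ) s =>
        (⨍ y in ball x r.1, (E.indicator (fun _ => (1:ℝ)) y) ^ (1:ℝ) ∂μ) ^ (1 / (1:ℝ))) := by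
      refine ⟨1, ?_⟩
      rintro _ ⟨t, rfl⟩
      beta_reduce
      rw [average_indicator_rpow μ E _ hE 1 le_rfl, div_one, Real.rpow_one]
      exact div_le_one_of_le₀ (measureReal_mono inter_subset_right (hμ x t t.2.1).2.ne)
        measureReal_nonneg
    have hle := le_ciSup hbdd r
    refine le_trans ?_ (add_le_add_left hle ε)
    rw [average_indicator_rpow μ E _ hE 1 le_rfl,
      average_indicator_rpow μ O _ hO.measurableSet 1 le_rfl, div_one, Real.rpow_one, Real.rpow_one]
    have hsplit : μ.real (O ∩ ball x r) ≤
        μ.real (E ∩ ball x r) + μ.real ((O \ E) ∩ ball x r) := by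
      refine (measureReal_mono ?_ ?_).trans (measureReal_union_le _ _)
      · rintro y ⟨hy, hyr⟩
        by_cases hyE : y ∈ E
        · exact Or.inl ⟨hyE, hyr⟩
        · exact Or.inr ⟨⟨hy, hyE⟩, hyr⟩
      · exact measure_union_ne_top (hfin r hr E) (hfin r hr _)
    have hpow : ε ^ p ≤ ε := by
      simpa using Real.rpow_le_rpow_of_exponent_ge hε hε1.le hp
    calc _ ≤ (μ.real (E ∩ ball x r) + μ.real ((O \ E) ∩ ball x r)) / μ.real (ball x r) := by
          gcongr
      _ ≤ _ := by
          rw [add_div]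
          linarith [hdens' r hr]
  · unfold maxFn
    refine ciSup_le fun r => ?_
    rw [average_indicator_rpow μ (O \ E) _ (hO.measurableSet.diff hE) p hp]
    calc _ ≤ (ε ^ p) ^ (1 / p) :=
          Real.rpow_le_rpow (by positivity) (hdens' r r.2.1) (by positivity)
      _ = ε := by
          rw [one_div, Real.rpow_rpow_inv hε.le (by linarith)]

end
end
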